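/- For every n ≥ 2 and all a, b ∈ ℝⁿ, the row-wise generalized cross product satisfies (a ⊗ b + b ⊗ a) ×ₙ b = b ⊗ (a ×ₙ b) as n × n(n−1)/2 matrices; equivalently (b ⊗ a) ×ₙ b = 2·sym(a ⊗ b) ×ₙ b = b ⊗ (a ×ₙ b). -/

import Mathlib

open Matrix BigOperators

/-- Index set `Pₙ = {(i,j) : 1 ≤ i < j ≤ n}` of strictly increasing pairs;
`ℝ^{n(n-1)/2}` is identified with `PairIdx n → ℝ`. -/
abbrev PairIdx (n : ℕ) := {p : Fin n × Fin n // p.1 < p.2}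

/-- The generalized cross product `a ×ₙ b ∈ ℝ^{n(n-1)/2}`,
with `(a ×ₙ b)_{(i,j)} = aᵢ bⱼ - aⱼ bᵢ` for `i < j`. -/
def crossN (n : ℕ) (a b : Fin n → ℝ) : PairIdx n → ℝ :=
  fun p => a p.1.1 * b p.1.2 - a p.1.2 * b p.1.1

/-- The matrix `⟦a⟧ₙ` with entries `⟦a⟧ₙ_{(i,j),k} = aᵢ δ_{jk} - aⱼ δ_{ik}`,
so that `⟦a⟧ₙ b = a ×ₙ b` for all `b`. -/
def crossMat (n : ℕ) (a : Fin n → ℝ) : Matrix (PairIdx n) (Fin n) ℝ :=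
  Matrix.of fun p k =>
    a p.1.1 * (if p.1.2 = k then 1 else 0) - a p.1.2 * (if p.1.1 = k then 1 else 0)

section CrossProduct

variable {n : ℕ}

theorem crossN_self (a : Fin n → ℝ) : crossN n a a = 0 :=
  funext fun _ => sub_eq_zero.mpr (mul_comm _ _)

theorem crossN_anticomm (a b : Fin n → ℝ) : -crossN n a b = crossN n b a := by
  ext p
  simp only [crossN, Pi.neg_apply]
  ring

theorem crossMat_mulVec (a b : Fin n → ℝ) : crossMat n a *ᵥ b = crossN n a b := by
  ext p
  simp only [mulVec, dotProduct, crossMat, of_apply, crossN, sub_mul, mul_assoc, ite_mul,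
    one_mul, zero_mul, mul_ite, mul_zero, Finset.sum_sub_distrib, Finset.sum_ite_eq,
    Finset.mem_univ, if_true]

theorem neg_vecMulVec_mul_crossMat_transpose {m : Type*} (u : m → ℝ) (v b : Fin n → ℝ) :
    -(vecMulVec u v * (crossMat n b)ᵀ) = vecMulVec u (crossN n v b) := by
  rw [vecMulVec_mul, vecMul_transpose, crossMat_mulVec, ← vecMulVec_neg, crossN_anticomm]

theorem vecMulVec_mul_crossMat_transpose_self {m : Type*} (u : m → ℝ) (b : Fin n → ℝ) :
    vecMulVec u b * (crossMat n b)ᵀ = 0 := by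
  rw [vecMulVec_mul, vecMul_transpose, crossMat_mulVec, crossN_self]
  exact Matrix.ext fun _ _ => mul_zero _

end CrossProduct

/-- `(a ⊗ b + b ⊗ a) ×ₙ b = b ⊗ (a ×ₙ b)` where `P ×ₙ b := -P ⟦b⟧ₙᵀ`;
equivalently `(b ⊗ a) ×ₙ b = 2·sym(a ⊗ b) ×ₙ b = b ⊗ (a ×ₙ b)`. -/
theorem sym_dyadic_cross (n : ℕ) (hn : 2 ≤ n) (a b : Fin n → ℝ) :
    -((vecMulVec a b + vecMulVec b a) * (crossMat n b)ᵀ) = vecMulVec b (crossN n a b) ∧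
    -(vecMulVec b a * (crossMat n b)ᵀ)
      = (2 : ℝ) • -(((1 : ℝ) / 2) • (vecMulVec a b + (vecMulVec a b)ᵀ) * (crossMat n b)ᵀ) ∧
    -(vecMulVec b a * (crossMat n b)ᵀ) = vecMulVec b (crossN n a b) := by
  have dyad_cross : -(vecMulVec b a * (crossMat n b)ᵀ) = vecMulVec b (crossN n a b) :=
    neg_vecMulVec_mul_crossMat_transpose b a b
  have sum_cross :
      -((vecMulVec a b + vecMulVec b a) * (crossMat n b)ᵀ) = vecMulVec b (crossN n a b) := by
    rw [Matrix.add_mul, vecMulVec_mul_crossMat_transpose_self, zero_add, dyad_cross]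
  have two_sym_cross :
      (2 : ℝ) • -(((1 : ℝ) / 2) • (vecMulVec a b + (vecMulVec a b)ᵀ) * (crossMat n b)ᵀ) =
        -((vecMulVec a b + vecMulVec b a) * (crossMat n b)ᵀ) := by
    rw [transpose_vecMulVec, Matrix.smul_mul, ← smul_neg, smul_smul, mul_one_div_cancel two_ne_zero,
      one_smul]
  exact ⟨sum_cross, dyad_cross.trans (two_sym_cross.trans sum_cross).symm, dyad_cross⟩
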